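/- (Initial velocity estimate for the regularized inclusion.) Under the stated assumptions on Z, V, X, A, 𝕍 and R, let δ > 0, v ∈ Z and ξ ∈ V* be such that −ξ − 𝕍v − δAv is a subgradient of R at v over Z, i.e. for all w ∈ Z, R(w) ≥ R(v) + ⟨−ξ − 𝕍v − δAv, w − v⟩. Then (⟨𝕍v,v⟩ + δ⟨Av,v⟩)^{1/2} ≤ dist_𝕍(−ξ, ∂R(0)). (Applied with v = ż_δ(0) and ξ = DI(z₀) − ℓ*, this is the estimate ν_δ(0) ≤ dist_𝕍(−DI(z₀) + ℓ*, ∂R(0)) for solutions of the δ-regularized system.) -/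

import Mathlib

/-- The dual norm `‖ξ‖_{𝕍⁻¹} = ⟨ξ, 𝕍⁻¹ξ⟩^{1/2}` of a functional `ξ ∈ V*`,
characterized as `sup {ξ v : ⟨𝕍v,v⟩ ≤ 1}`. -/
noncomputable def dualNormV {V : Type*} [NormedAddCommGroup V]
    [InnerProductSpace ℝ V] (VV : V →L[ℝ] V →L[ℝ] ℝ) (ξ : V →L[ℝ] ℝ) : ℝ :=
  sSup {r : ℝ | ∃ v : V, VV v v ≤ 1 ∧ r = ξ v}

/-- The subdifferential `∂R(0) = {σ ∈ V* : ⟨σ,w⟩ ≤ R(w) ∀ w ∈ V}`. -/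
def subdiffR0 {V X : Type*} [NormedAddCommGroup V] [InnerProductSpace ℝ V]
    [NormedAddCommGroup X] [NormedSpace ℝ X]
    (R : X → ℝ) (jVX : V →L[ℝ] X) : Set (V →L[ℝ] ℝ) :=
  {σ : V →L[ℝ] ℝ | ∀ w : V, σ w ≤ R (jVX w)}

/-- `dist_𝕍(ξ, ∂R(0)) = inf {‖ξ − σ‖_{𝕍⁻¹} : σ ∈ ∂R(0)}`. -/
noncomputable def distV {V X : Type*} [NormedAddCommGroup V]
    [InnerProductSpace ℝ V] [NormedAddCommGroup X] [NormedSpace ℝ X]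
    (VV : V →L[ℝ] V →L[ℝ] ℝ) (R : X → ℝ) (jVX : V →L[ℝ] X)
    (ξ : V →L[ℝ] ℝ) : ℝ :=
  sInf {r : ℝ | ∃ σ ∈ subdiffR0 R jVX, r = dualNormV VV (ξ - σ)}

/-!
Testing the subgradient inequality with `w = 0` gives `⟨𝕍v,v⟩ + δ⟨Av,v⟩ ≤ ⟨-ξ,v⟩ - R(v)`, and every
`σ ∈ ∂R(0)` satisfies `⟨σ,v⟩ ≤ R(v)`. Hence, by the Cauchy–Schwarz inequality for the dual norm,
`ν² := ⟨𝕍v,v⟩ + δ⟨Av,v⟩ ≤ ⟨-ξ - σ,v⟩ ≤ ‖-ξ - σ‖_{𝕍⁻¹} ⟨𝕍v,v⟩^{1/2} ≤ ‖-ξ - σ‖_{𝕍⁻¹} ν`.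
Divide by `ν` and take the infimum over `σ`.
-/

section Coercive

variable {E : Type*} [SeminormedAddCommGroup E] [NormedSpace ℝ E] {B : E →L[ℝ] E →L[ℝ] ℝ}

theorem isCoercive_of_mul_norm_sq_le {C : ℝ} (hC : 0 < C) (hB : ∀ v, C * ‖v‖ ^ 2 ≤ B v v) :
    IsCoercive B :=
  ⟨C, hC, fun v => by simpa only [mul_assoc, ← sq] using hB v⟩

theorem isNonneg_toBilinForm_of_isCoercive (hB : IsCoercive B) : B.toBilinForm.IsNonneg := by
  obtain ⟨C, hC, hCB⟩ := hB
  exact ⟨fun v => le_trans (by positivity) (hCB v)⟩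

theorem isBounded_setOf_apply_self_le (hB : IsCoercive B) (r : ℝ) :
    Bornology.IsBounded {v : E | B v v ≤ r} := by
  obtain ⟨C, hC, hCB⟩ := hB
  refine isBounded_iff_forall_norm_le.2 ⟨√(r / C), fun v hv => Real.le_sqrt_of_sq_le ?_⟩
  rw [le_div_iff₀' hC]
  calc C * ‖v‖ ^ 2 = C * ‖v‖ * ‖v‖ := by ring
    _ ≤ B v v := hCB v
    _ ≤ r := hv

end Coercive

section DualNorm

variable {V : Type*} [NormedAddCommGroup V] [InnerProductSpace ℝ V] {B : V →L[ℝ] V →L[ℝ] ℝ}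

theorem apply_le_dualNormV (hB : IsCoercive B) (η : V →L[ℝ] ℝ) {v : V} (hv : B v v ≤ 1) :
    η v ≤ dualNormV B η := by
  have hbdd : BddAbove (η '' {v : V | B v v ≤ 1}) :=
    (η.lipschitz.isBounded_image (isBounded_setOf_apply_self_le hB 1)).bddAbove
  refine le_csSup (hbdd.mono ?_) ⟨v, hv, rfl⟩
  rintro _ ⟨w, hw, rfl⟩
  exact Set.mem_image_of_mem η hw

theorem dualNormV_nonneg (hB : IsCoercive B) (η : V →L[ℝ] ℝ) : 0 ≤ dualNormV B η := by
  simpa only [map_zero] using apply_le_dualNormV hB η (v := 0) (by simp)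

theorem apply_le_dualNormV_mul_sqrt (hB : IsCoercive B) (η : V →L[ℝ] ℝ) (v : V) :
    η v ≤ dualNormV B η * √(B v v) := by
  rcases eq_or_ne v 0 with rfl | hv
  · simp
  have ⟨C, hC, hCB⟩ := hB
  have hBv : 0 < B v v := lt_of_lt_of_le (by positivity) (hCB v)
  have hunit : B ((√(B v v))⁻¹ • v) ((√(B v v))⁻¹ • v) = 1 := by
    simp only [map_smul, smul_apply, smul_eq_mul]
    rw [← mul_assoc, ← mul_inv, Real.mul_self_sqrt hBv.le, inv_mul_cancel₀ hBv.ne']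
  have hscaled : (√(B v v))⁻¹ * η v ≤ dualNormV B η := by
    simpa only [map_smul, smul_eq_mul] using apply_le_dualNormV hB η hunit.le
  rwa [inv_mul_le_iff₀' (Real.sqrt_pos.2 hBv)] at hscaled

theorem sqrt_le_dualNormV (hB : IsCoercive B) {η : V →L[ℝ] ℝ} {v : V} {N : ℝ}
    (hBN : B v v ≤ N) (hNη : N ≤ η v) : √N ≤ dualNormV B η := by
  have hD := dualNormV_nonneg hB η
  by_contra! hlt
  have hN : 0 < √N := hD.trans_lt hlt
  have hself : N < N :=
    calc N ≤ η v := hNη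
      _ ≤ dualNormV B η * √(B v v) := apply_le_dualNormV_mul_sqrt hB η v
      _ ≤ dualNormV B η * √N := by gcongr
      _ < √N * √N := by gcongr
      _ = N := Real.mul_self_sqrt (Real.sqrt_pos.1 hN).le
  exact hself.false

end DualNorm

section Subdifferential

variable {V X : Type*} [NormedAddCommGroup V] [InnerProductSpace ℝ V]
  [NormedAddCommGroup X] [NormedSpace ℝ X]

theorem zero_mem_subdiffR0 {R : X → ℝ} (hR : ∀ x, 0 ≤ R x) (j : V →L[ℝ] X) :
    0 ∈ subdiffR0 R j :=
  fun w => hR (j w)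

theorem le_distV {B : V →L[ℝ] V →L[ℝ] ℝ} {R : X → ℝ} {j : V →L[ℝ] X} {ξ : V →L[ℝ] ℝ} {b : ℝ}
    (hne : (subdiffR0 R j).Nonempty) (hb : ∀ σ ∈ subdiffR0 R j, b ≤ dualNormV B (ξ - σ)) :
    b ≤ distV B R j ξ := by
  obtain ⟨σ₀, hσ₀⟩ := hne
  refine le_csInf ⟨_, σ₀, hσ₀, rfl⟩ ?_
  rintro _ ⟨σ, hσ, rfl⟩
  exact hb σ hσ

theorem add_le_sub_apply_of_subgradient {Z : Type*} [AddCommGroup Z] [Module ℝ Z]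
    {i : Z →ₗ[ℝ] V} {j : V →L[ℝ] X} {A : LinearMap.BilinForm ℝ Z} {B : V →L[ℝ] V →L[ℝ] ℝ}
    {R : X → ℝ} (hR0 : R 0 = 0) {δ : ℝ} {v : Z} {ξ σ : V →L[ℝ] ℝ}
    (hsubgrad : ∀ w : Z, R (j (i w)) ≥ R (j (i v)) +
      (-ξ (i (w - v)) - B (i v) (i (w - v)) - δ * A v (w - v)))
    (hσ : σ ∈ subdiffR0 R j) :
    B (i v) (i v) + δ * A v v ≤ (-ξ - σ) (i v) := by
  have htest := hsubgrad 0
  simp only [map_zero, zero_sub, map_neg, hR0] at htest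
  have hσv : σ (i v) ≤ R (j (i v)) := hσ (i v)
  simp only [sub_apply, neg_apply]
  linarith

end Subdifferential

theorem stmt7_general
    {Z V X : Type*} [AddCommGroup Z] [Module ℝ Z]
    [NormedAddCommGroup V] [InnerProductSpace ℝ V]
    [NormedAddCommGroup X] [NormedSpace ℝ X]
    (jZV : Z →ₗ[ℝ] V) (jVX : V →L[ℝ] X)
    (A : LinearMap.BilinForm ℝ Z) (hA : A.IsNonneg)
    (VV : V →L[ℝ] V →L[ℝ] ℝ) (hVV : IsCoercive VV)
    (R : X → ℝ) (hR0 : R 0 = 0) (hne : (subdiffR0 R jVX).Nonempty)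
    (δ : ℝ) (hδ : 0 ≤ δ) (v : Z) (ξ : V →L[ℝ] ℝ)
    (hsubgrad : ∀ w : Z, R (jVX (jZV w)) ≥ R (jVX (jZV v)) +
      (-ξ (jZV (w - v)) - VV (jZV v) (jZV (w - v)) - δ * A v (w - v))) :
    √(VV (jZV v) (jZV v) + δ * A v v) ≤ distV VV R jVX (-ξ) := by
  have hAv : 0 ≤ δ * A v v := mul_nonneg hδ (hA.nonneg v)
  exact le_distV hne fun σ hσ => sqrt_le_dualNormV hVV (le_add_of_nonneg_right hAv)
    (add_le_sub_apply_of_subgradient hR0 hsubgrad hσ)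

/-- Initial velocity estimate for the `δ`-regularized inclusion
(estimate `est.initialdatumdelta` of the paper): if
`−ξ − 𝕍v − δAv ∈ ∂R(v)` (over `Z`), then
`ν_δ := (⟨𝕍v,v⟩ + δ⟨Av,v⟩)^{1/2} ≤ dist_𝕍(−ξ, ∂R(0))`. -/
theorem stmt7
    {Z V X : Type*}
    [NormedAddCommGroup Z] [InnerProductSpace ℝ Z] [CompleteSpace Z]
    [TopologicalSpace.SeparableSpace Z]
    [NormedAddCommGroup V] [InnerProductSpace ℝ V] [CompleteSpace V]
    [TopologicalSpace.SeparableSpace V]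
    [NormedAddCommGroup X] [NormedSpace ℝ X]
    (jZV : Z →L[ℝ] V) (hjZV_inj : Function.Injective jZV)
    (hjZV_cpt : IsCompactOperator jZV)
    (jVX : V →L[ℝ] X) (hjVX_inj : Function.Injective jVX)
    (A : Z →L[ℝ] Z →L[ℝ] ℝ) (hA_symm : ∀ z w : Z, A z w = A w z)
    (α : ℝ) (hα : 0 < α) (hA_ell : ∀ z : Z, α * ‖z‖ ^ 2 ≤ A z z)
    (VV : V →L[ℝ] V →L[ℝ] ℝ) (hVV_symm : ∀ u v : V, VV u v = VV v u)
    (γ : ℝ) (hγ : 0 < γ) (hVV_ell : ∀ v : V, γ * ‖v‖ ^ 2 ≤ VV v v)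
    (R : X → ℝ) (hR_conv : ConvexOn ℝ Set.univ R) (hR_cont : Continuous R)
    (hR_hom : ∀ t : ℝ, 0 ≤ t → ∀ x : X, R (t • x) = t * R x)
    (c C : ℝ) (hc : 0 < c) (hC : 0 < C)
    (hR_low : ∀ x : X, c * ‖x‖ ≤ R x) (hR_up : ∀ x : X, R x ≤ C * ‖x‖)
    (δ : ℝ) (hδ : 0 < δ) (v : Z) (ξ : V →L[ℝ] ℝ)
    (hsubgrad : ∀ w : Z, R (jVX (jZV w)) ≥ R (jVX (jZV v)) +
      (-ξ (jZV (w - v)) - VV (jZV v) (jZV (w - v)) - δ * A v (w - v))) :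
    Real.sqrt (VV (jZV v) (jZV v) + δ * A v v) ≤ distV VV R jVX (-ξ) := by
  have hA : IsCoercive A := isCoercive_of_mul_norm_sq_le hα hA_ell
  have hVV : IsCoercive VV := isCoercive_of_mul_norm_sq_le hγ hVV_ell
  have hR0 : R 0 = 0 := by simpa using hR_hom 0 le_rfl 0
  have hR (x : X) : 0 ≤ R x := le_trans (by positivity) (hR_low x)
  exact stmt7_general jZV.toLinearMap jVX A.toBilinForm (isNonneg_toBilinForm_of_isCoercive hA)
    VV hVV R hR0 ⟨0, zero_mem_subdiffR0 hR jVX⟩ δ hδ.le v ξ hsubgrad
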